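/- Let J and V be simple objects of C with S'(J,V) ≠ 0. If dim(J) = 0, then dim(V) = 0. -/

import Mathlib

open CategoryTheory MonoidalCategory

namespace RibbonPaper

/-- A twist (balancing/ribbon structure) on a braided category with right duals:
a natural family of isomorphisms `θ V : V ⟶ V` satisfying
`θ (V ⊗ W) = c_{W,V} ∘ c_{V,W} ∘ (θ V ⊗ θ W)` and `θ (Vᘁ) = (θ V)ᘁ`. -/
structure Twist (C : Type*) [Category C] [MonoidalCategory C] [BraidedCategory C]
    [RightRigidCategory C] where
  θ : ∀ V : C, V ⟶ V
  isIso : ∀ V : C, IsIso (θ V)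
  natural : ∀ {V W : C} (f : V ⟶ W), f ≫ θ W = θ V ≫ f
  tensor : ∀ V W : C, θ (V ⊗ W) = (θ V ⊗ₘ θ W) ≫ (β_ V W).hom ≫ (β_ W V).hom
  dual : ∀ V : C, θ (Vᘁ) = (θ V)ᘁ

variable {C : Type*} [Category C] [MonoidalCategory C] [BraidedCategory C]
  [Preadditive C] [MonoidalPreadditive C] [RightRigidCategory C]

variable (T : Twist C)

/-- The modified evaluation `d'_V := d_V ∘ c_{V,V*} ∘ (θ_V ⊗ id_{V*})`. -/
def dP (V : C) : V ⊗ Vᘁ ⟶ 𝟙_ C :=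
  (T.θ V ⊗ₘ 𝟙 (Vᘁ)) ≫ (β_ V (Vᘁ)).hom ≫ ε_ V (Vᘁ)

/-- The modified coevaluation `b'_V := (id_{V*} ⊗ θ_V) ∘ c_{V,V*} ∘ b_V`. -/
def bP (V : C) : 𝟙_ C ⟶ Vᘁ ⊗ V :=
  η_ V (Vᘁ) ≫ (β_ V (Vᘁ)).hom ≫ (𝟙 (Vᘁ) ⊗ₘ T.θ V)

/-- The partial right trace `⟨f⟩_R`-endomorphism:
`(id_U ⊗ d'_V) ∘ (f ⊗ id_{V*}) ∘ (id_U ⊗ b_V) : U ⟶ U`. -/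
def ptrR {U V : C} (f : U ⊗ V ⟶ U ⊗ V) : U ⟶ U :=
  (ρ_ U).inv ≫ (U ◁ η_ V (Vᘁ)) ≫ (α_ U V (Vᘁ)).inv ≫ (f ▷ (Vᘁ)) ≫
    (α_ U V (Vᘁ)).hom ≫ (U ◁ dP T V) ≫ (ρ_ U).hom

/-- The partial left trace `⟨f⟩_L`-endomorphism:
`(d_U ⊗ id_V) ∘ (id_{U*} ⊗ f) ∘ (b'_U ⊗ id_V) : V ⟶ V`. -/
def ptrL {U V : C} (f : U ⊗ V ⟶ U ⊗ V) : V ⟶ V :=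
  (λ_ V).inv ≫ (bP T U ▷ V) ≫ (α_ (Uᘁ) U V).hom ≫ ((Uᘁ) ◁ f) ≫
    (α_ (Uᘁ) U V).inv ≫ (ε_ U (Uᘁ) ▷ V) ≫ (λ_ V).hom

/-- An object `V` is ambidextrous if `tr_L f = tr_R f` for all `f : V ⊗ V ⟶ V ⊗ V`. -/
def Ambidextrous (V : C) : Prop := ∀ f : V ⊗ V ⟶ V ⊗ V, ptrL T f = ptrR T f

/-- The categorical trace `tr_C(f) := d'_V ∘ (f ⊗ id_{V*}) ∘ b_V ∈ K = End(𝟙)`. -/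
def trC {V : C} (f : V ⟶ V) : 𝟙_ C ⟶ 𝟙_ C :=
  η_ V (Vᘁ) ≫ (f ▷ (Vᘁ)) ≫ dP T V

/-- The categorical (quantum) dimension `dim V := tr_C(id_V)`. -/
def qdim (V : C) : 𝟙_ C ⟶ 𝟙_ C := trC T (𝟙 V)

/-- The action of `K = End(𝟙)` on Hom-groups: `k • f := k ⊗ f` (up to unitors). -/
def smul {V W : C} (k : 𝟙_ C ⟶ 𝟙_ C) (f : V ⟶ W) : V ⟶ W :=
  (λ_ V).inv ≫ (k ⊗ₘ f) ≫ (λ_ W).hom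

/-- `V` is simple if `End(V) = K ⋅ id_V`. -/
def IsSimple (V : C) : Prop := ∀ f : V ⟶ V, ∃ k : 𝟙_ C ⟶ 𝟙_ C, f = smul k (𝟙 V)

/-- The endomorphism of `Y` computing `S'(X,Y)`:
`(id_Y ⊗ d'_X) ∘ ((c_{X,Y} ∘ c_{Y,X}) ⊗ id_{X*}) ∘ (id_Y ⊗ b_X)`. -/
def SMap (X Y : C) : Y ⟶ Y := ptrR T ((β_ Y X).hom ≫ (β_ X Y).hom)

/-- `V ∈ A(J)`: `V` is simple and `S'(J,V) ≠ 0`. -/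
def InA (J V : C) : Prop :=
  IsSimple V ∧ ∃ s : 𝟙_ C ⟶ 𝟙_ C, SMap T J V = smul s (𝟙 V) ∧ s ≠ 0

omit [Preadditive C] [MonoidalPreadditive C] [RightRigidCategory C] in
/-- A loop around a strand `V` can be closed on either side of the strand, at the cost of
replacing the double braiding with `X` by the inverse double braiding with `Y`. -/
theorem loop_transfer {V X Y : C} (η : 𝟙_ C ⟶ X ⊗ Y) (e : X ⊗ Y ⟶ 𝟙_ C) :
    (ρ_ V).inv ≫ (V ◁ η) ≫ (α_ V X Y).inv ≫ (((β_ V X).hom ≫ (β_ X V).hom) ▷ Y) ≫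
      (α_ V X Y).hom ≫ (V ◁ e) ≫ (ρ_ V).hom =
    (λ_ V).inv ≫ (η ▷ V) ≫ (α_ X Y V).hom ≫ (X ◁ ((β_ V Y).inv ≫ (β_ Y V).inv)) ≫
      (α_ X Y V).inv ≫ (e ▷ V) ≫ (λ_ V).hom := by
  have top : (ρ_ V).inv ≫ V ◁ η ≫ (α_ V X Y).inv ≫ (β_ V X).hom ▷ Y =
      (λ_ V).inv ≫ η ▷ V ≫ (α_ X Y V).hom ≫ X ◁ (β_ V Y).inv ≫ (α_ X V Y).inv := by
    have h := BraidedCategory.braiding_naturality_right V η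
    rw [braiding_tensorUnit_right, BraidedCategory.braiding_tensor_right_hom] at h
    simp only [Category.assoc] at h
    rw [← cancel_mono ((α_ X V Y).hom ≫ X ◁ (β_ V Y).hom ≫ (α_ X Y V).inv)]
    simp [h]
  have bot : (β_ X V).hom ▷ Y ≫ (α_ V X Y).hom ≫ V ◁ e ≫ (ρ_ V).hom =
      (α_ X V Y).hom ≫ X ◁ (β_ Y V).inv ≫ (α_ X Y V).inv ≫ e ▷ V ≫ (λ_ V).hom := by
    have h := BraidedCategory.braiding_naturality_left e V
    rw [braiding_tensorUnit_left, BraidedCategory.braiding_tensor_left_hom] at h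
    simp only [Category.assoc] at h
    rw [← cancel_epi ((α_ X Y V).hom ≫ X ◁ (β_ Y V).hom ≫ (α_ X V Y).inv)]
    rw [← cancel_mono (ρ_ V).inv]
    simp [h]
  simp only [comp_whiskerRight, Category.assoc]
  rw [bot, reassoc_of% top]
  simp

omit [BraidedCategory C] [Preadditive C] [MonoidalPreadditive C] [RightRigidCategory C] in
/-- Two linked loops: the loop through `V` may be contracted before the one through `X`. -/
theorem loop_interchange {V V' X Y : C} (ηV : 𝟙_ C ⟶ V ⊗ V') (eV : V ⊗ V' ⟶ 𝟙_ C)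
    (η : 𝟙_ C ⟶ X ⊗ Y) (e : X ⊗ Y ⟶ 𝟙_ C) (t : Y ⊗ V ⟶ Y ⊗ V) :
    ηV ≫ ((λ_ V).inv ≫ (η ▷ V) ≫ (α_ X Y V).hom ≫ (X ◁ t) ≫
      (α_ X Y V).inv ≫ (e ▷ V) ≫ (λ_ V).hom) ▷ V' ≫ eV =
    η ≫ X ◁ ((ρ_ Y).inv ≫ (Y ◁ ηV) ≫ (α_ Y V V').inv ≫ (t ▷ V') ≫
      (α_ Y V V').hom ≫ (Y ◁ eV) ≫ (ρ_ Y).hom) ≫ e := by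
  calc
    _ = 𝟙 _ ⊗≫ (𝟙_ C ◁ ηV ≫ η ▷ (V ⊗ V')) ⊗≫ X ◁ t ▷ V' ⊗≫
        (e ▷ (V ⊗ V') ≫ 𝟙_ C ◁ eV) ⊗≫ 𝟙 _ := by monoidal
    _ = 𝟙 _ ⊗≫ (η ▷ 𝟙_ C ≫ (X ⊗ Y) ◁ ηV) ⊗≫ X ◁ t ▷ V' ⊗≫
        ((X ⊗ Y) ◁ eV ≫ e ▷ 𝟙_ C) ⊗≫ 𝟙 _ := by
      rw [whisker_exchange, whisker_exchange]
    _ = _ := by monoidal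

omit [BraidedCategory C] [Preadditive C] [MonoidalPreadditive C] [RightRigidCategory C] in
/-- Every endomorphism of a dual object slides along the coevaluation. -/
theorem exists_coevaluation_slide {X Y : C} [ExactPairing X Y] (g : Y ⟶ Y) :
    ∃ f : X ⟶ X, η_ X Y ≫ X ◁ g = η_ X Y ≫ f ▷ Y := by
  refine ⟨(λ_ X).inv ≫ η_ X Y ▷ X ≫ (X ◁ g) ▷ X ≫ (α_ X Y X).hom ≫ X ◁ ε_ X Y ≫
    (ρ_ X).hom, ?_⟩
  symm
  calc
    _ = 𝟙 _ ⊗≫ (𝟙_ C ◁ η_ X Y ≫ (η_ X Y ≫ X ◁ g) ▷ (X ⊗ Y)) ⊗≫ X ◁ ε_ X Y ▷ Y ⊗≫ 𝟙 _ := by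
      monoidal
    _ = η_ X Y ⊗≫ X ◁ (g ▷ 𝟙_ C ≫ Y ◁ η_ X Y) ⊗≫ X ◁ ε_ X Y ▷ Y ⊗≫ 𝟙 _ := by
      rw [whisker_exchange]
      monoidal
    _ = η_ X Y ⊗≫ X ◁ g ⊗≫
        X ◁ (Y ◁ η_ X Y ≫ (α_ Y X Y).inv ≫ ε_ X Y ▷ Y) ⊗≫ 𝟙 _ := by
      monoidal
    _ = _ := by
      rw [ExactPairing.coevaluation_evaluation]
      monoidal

omit [Preadditive C] [MonoidalPreadditive C] in
theorem trC_smul_id (k : 𝟙_ C ⟶ 𝟙_ C) (V : C) : trC T (smul k (𝟙 V)) = k ≫ qdim T V := by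
  unfold qdim trC smul
  calc
    _ = 𝟙 _ ⊗≫ (𝟙_ C ◁ η_ V Vᘁ ≫ k ▷ (V ⊗ Vᘁ)) ⊗≫ dP T V := by
      rw [tensorHom_id]
      monoidal
    _ = _ := by
      rw [whisker_exchange]
      monoidal

omit [Preadditive C] [MonoidalPreadditive C] in
/-- The trace of `SMap T J V` is the trace of some endomorphism of `J`. -/
theorem exists_trC_SMap_eq (J V : C) : ∃ f : J ⟶ J, trC T (SMap T J V) = trC T f := by
  obtain ⟨f, hf⟩ := exists_coevaluation_slide (X := J) (Y := Jᘁ)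
    ((ρ_ _).inv ≫ (Jᘁ ◁ η_ V Vᘁ) ≫ (α_ _ V Vᘁ).inv ≫
      (((β_ V Jᘁ).inv ≫ (β_ Jᘁ V).inv) ▷ Vᘁ) ≫
      (α_ _ V Vᘁ).hom ≫ (Jᘁ ◁ dP T V) ≫ (ρ_ _).hom)
  refine ⟨f, ?_⟩
  unfold trC SMap ptrR
  rw [loop_transfer, loop_interchange, reassoc_of% hf]

/-- If `J, V` are simple with `S'(J,V) ≠ 0` and `dim(J) = 0`, then
`dim(V) = 0`. (The ground ring `K = End(𝟙)` is assumed to be an integral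
domain.) -/
theorem statement9
    (hK : ∀ a b : 𝟙_ C ⟶ 𝟙_ C, a ≫ b = 0 → a = 0 ∨ b = 0)
    (J V : C) (hJ : IsSimple J) (hV : IsSimple V)
    (sJV : 𝟙_ C ⟶ 𝟙_ C) (hsJV : SMap T J V = smul sJV (𝟙 V)) (hne : sJV ≠ 0)
    (hdimJ : qdim T J = 0) :
    qdim T V = 0 := by
  obtain ⟨f, hf⟩ := exists_trC_SMap_eq T J V
  obtain ⟨k, rfl⟩ := hJ f
  rw [hsJV, trC_smul_id, trC_smul_id, hdimJ, Limits.comp_zero] at hf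
  exact (hK _ _ hf).resolve_left hne

end RibbonPaper
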